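/- arXiv:2005.06207 — 3 statements merged into one kernel-verified Lean document; each statement's English description precedes it below -/
import Mathlib

section
/- Suppose the standing assumptions on f, g, h, Ω, F hold. If x⋆ ∈ dom(F) is a local minimizer of F on ℝⁿ and c⋆ := F(x⋆), then c⋆·∂g(x⋆) ⊆ ∂̂f(x⋆) + ∇h(x⋆); that is, for every y⋆ ∈ ∂g(x⋆) one has c⋆·y⋆ − ∇h(x⋆) ∈ ∂̂f(x⋆). -/
open Filter Topology
open scoped RealInnerProductSpace

noncomputable section

/-- The Fréchet subdifferential of an extended-real-valued function `φ` at `x`: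
the set of `y` with `liminf_{z→x, z≠x} (φ z − φ x − ⟨y, z−x⟩)/‖z−x‖ ≥ 0`,
empty when `φ x = +∞`. -/
def fsub {n : ℕ} (φ : EuclideanSpace ℝ (Fin n) → EReal) (x : EuclideanSpace ℝ (Fin n)) :
    Set (EuclideanSpace ℝ (Fin n)) :=
  {y | φ x ≠ ⊤ ∧
    0 ≤ liminf (fun z => (φ z - φ x - ((⟪y, z - x⟫ : ℝ) : EReal)) / ((‖z - x‖ : ℝ) : EReal))
      (𝓝[≠] x)}

/-- The limiting (Mordukhovich) subdifferential. -/
def lsub {n : ℕ} (φ : EuclideanSpace ℝ (Fin n) → EReal) (x : EuclideanSpace ℝ (Fin n)) :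
    Set (EuclideanSpace ℝ (Fin n)) :=
  {y | ∃ u : ℕ → EuclideanSpace ℝ (Fin n), ∃ v : ℕ → EuclideanSpace ℝ (Fin n),
      Tendsto u atTop (𝓝 x) ∧ Tendsto (fun k => φ (u k)) atTop (𝓝 (φ x)) ∧
      (∀ k, v k ∈ fsub φ (u k)) ∧ Tendsto v atTop (𝓝 y)}

/-- The subdifferential of a convex real-valued function. -/
def csub {n : ℕ} (g : EuclideanSpace ℝ (Fin n) → ℝ) (x : EuclideanSpace ℝ (Fin n)) :
    Set (EuclideanSpace ℝ (Fin n)) :=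
  {y | ∀ z, g x + ⟪y, z - x⟫ ≤ g z}

/-- The (possibly set-valued) proximity operator of a proper lsc extended-real-valued
function `ψ` at `u`. -/
def proxSet {n : ℕ} (ψ : EuclideanSpace ℝ (Fin n) → EReal) (u : EuclideanSpace ℝ (Fin n)) :
    Set (EuclideanSpace ℝ (Fin n)) :=
  {y | ∀ z, ψ y + ((‖y - u‖ ^ 2 / 2 : ℝ) : EReal) ≤ ψ z + ((‖z - u‖ ^ 2 / 2 : ℝ) : EReal)}

/-- The fractional objective `F = (f+h)/g` on `Ω ∩ dom f`, `+∞` elsewhere. -/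
def Ffrac {n : ℕ} (f : EuclideanSpace ℝ (Fin n) → EReal) (g h : EuclideanSpace ℝ (Fin n) → ℝ) :
    EuclideanSpace ℝ (Fin n) → EReal :=
  fun x => if g x ≠ 0 ∧ f x ≠ ⊤ then ((((f x).toReal + h x) / g x : ℝ) : EReal) else ⊤

/-!
Put `c = F(x⋆) ≥ 0`. Clearing the denominator (Dinkelbach's trick), `x⋆` is a local minimizer of
`f + h - c g`, with value `0`. A subgradient `y` of `g` at `x⋆` bounds `g` from below by an affine
function touching it at `x⋆`, so `x⋆` is also a local minimizer of `f + (h - c ⟪y, ·⟫)`. Fermat's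
rule and the sum rule for a differentiable summand then give `0 - (∇h(x⋆) - c y) ∈ ∂̂f(x⋆)`.
-/

theorem ne_bot_of_zero_le_add_coe {u : EReal} {r : ℝ} (hur : 0 ≤ u + r) : u ≠ ⊥ := by
  rintro rfl
  simp at hur

theorem zero_le_liminf_iff_forall_neg_le {α : Type*} {l : Filter α} {u : α → EReal} :
    0 ≤ liminf u l ↔ ∀ ε : ℝ, 0 < ε → ∀ᶠ a in l, ((-ε : ℝ) : EReal) ≤ u a := by
  rw [le_liminf_iff']
  constructor
  · intro hu ε hε
    exact hu _ (by exact_mod_cast neg_lt_zero.mpr hε)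
  · intro hu b hb
    obtain ⟨r, hbr, hr⟩ := EReal.lt_iff_exists_real_btwn.mp hb
    have hr_neg : r < 0 := by exact_mod_cast hr
    filter_upwards [hu (-r) (neg_pos.mpr hr_neg)] with a ha
    exact hbr.le.trans (by simpa only [neg_neg] using ha)

theorem coe_le_sub_sub_div_coe_iff {u : EReal} {p q r d : ℝ} (hd : 0 < d) :
    (r : EReal) ≤ (u - p - q) / d ↔ p + ((q + r * d : ℝ) : EReal) ≤ u := by
  have hreorder : ((r * d : ℝ) : EReal) + q + p = p + ((q + r * d : ℝ) : EReal) := by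
    norm_cast
    ring
  rw [EReal.le_div_iff_mul_le (by exact_mod_cast hd) (EReal.coe_ne_top d), ← EReal.coe_mul,
    EReal.le_sub_iff_add_le (by simp) (by simp), EReal.le_sub_iff_add_le (by simp) (by simp),
    hreorder]

theorem isLocalMin_add_coe_of_sub_le_sub {α : Type*} [TopologicalSpace α] {f : α → EReal}
    {k m : α → ℝ} {x : α} (hmin : IsLocalMin (fun z => f z + (k z : EReal)) x)
    (hkm : ∀ᶠ z in 𝓝 x, k z - k x ≤ m z - m x) :
    IsLocalMin (fun z => f z + (m z : EReal)) x := by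
  filter_upwards [hmin, hkm] with z hz hkmz
  calc f x + (m x : EReal)
      = f x + (k x : EReal) + ((m x - k x : ℝ) : EReal) := by
        rw [add_assoc, ← EReal.coe_add, add_sub_cancel]
    _ ≤ f z + (k z : EReal) + ((m x - k x : ℝ) : EReal) := by gcongr
    _ = f z + ((k z + (m x - k x) : ℝ) : EReal) := by rw [add_assoc, ← EReal.coe_add]
    _ ≤ f z + (m z : EReal) := by
        gcongr
        linarith

theorem hasGradientAt_sub_mul_inner {E : Type*} [NormedAddCommGroup E] [InnerProductSpace ℝ E]
    [CompleteSpace E] {h : E → ℝ} {v x : E} (hh : HasGradientAt h v x) (c : ℝ) (y : E) :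
    HasGradientAt (fun z => h z - c * ⟪y, z⟫) (v - c • y) x := by
  rw [hasGradientAt_iff_hasFDerivAt, map_sub, map_smul]
  exact hh.hasFDerivAt.sub (((InnerProductSpace.toDual ℝ E y).hasFDerivAt).const_mul c)

section FrechetSubdifferential

variable {n : ℕ} {φ : EuclideanSpace ℝ (Fin n) → EReal} {x y : EuclideanSpace ℝ (Fin n)}

theorem mem_fsub_iff_forall_eventually_le (hx_top : φ x ≠ ⊤) (hx_bot : φ x ≠ ⊥) :
    y ∈ fsub φ x ↔ ∀ ε : ℝ, 0 < ε →
      ∀ᶠ z in 𝓝 x, φ x + ((⟪y, z - x⟫ - ε * ‖z - x‖ : ℝ) : EReal) ≤ φ z := by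
  have hquot : ∀ ε : ℝ, ∀ z ≠ x,
      (((-ε : ℝ) : EReal) ≤ (φ z - φ x - (⟪y, z - x⟫ : ℝ)) / (‖z - x‖ : ℝ) ↔
        φ x + ((⟪y, z - x⟫ - ε * ‖z - x‖ : ℝ) : EReal) ≤ φ z) := by
    intro ε z hz
    rw [← EReal.coe_toReal hx_top hx_bot,
      coe_le_sub_sub_div_coe_iff (norm_pos_iff.mpr (sub_ne_zero.mpr hz)), neg_mul, ← sub_eq_add_neg]
  simp only [fsub, Set.mem_ofPred_eq, hx_top, ne_eq, not_false_eq_true, true_and,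
    zero_le_liminf_iff_forall_neg_le, eventually_nhdsWithin_iff, Set.mem_compl_singleton_iff]
  refine forall₂_congr fun ε _ => eventually_congr (.of_forall fun z => ?_)
  rcases eq_or_ne z x with rfl | hz
  · simp
  · simp only [hz, not_false_eq_true, forall_const, hquot ε z hz]

theorem zero_mem_fsub_of_isLocalMin (hx_top : φ x ≠ ⊤) (hx_bot : φ x ≠ ⊥)
    (hmin : IsLocalMin φ x) : 0 ∈ fsub φ x := by
  refine (mem_fsub_iff_forall_eventually_le hx_top hx_bot).mpr fun ε hε => ?_
  filter_upwards [hmin] with z hz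
  have hslope : ⟪(0 : EuclideanSpace ℝ (Fin n)), z - x⟫ - ε * ‖z - x‖ ≤ 0 := by
    rw [inner_zero_left, zero_sub, neg_nonpos]
    positivity
  calc φ x + ((⟪0, z - x⟫ - ε * ‖z - x‖ : ℝ) : EReal)
      ≤ φ x + ((0 : ℝ) : EReal) := by gcongr
    _ = φ x := by rw [EReal.coe_zero, add_zero]
    _ ≤ φ z := hz

theorem sub_mem_fsub_of_mem_fsub_add {k : EuclideanSpace ℝ (Fin n) → ℝ}
    {v : EuclideanSpace ℝ (Fin n)} (hx_bot : φ x ≠ ⊥) (hk : HasGradientAt k v x)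
    (hy : y ∈ fsub (fun z => φ z + (k z : EReal)) x) : y - v ∈ fsub φ x := by
  have hx_top : φ x ≠ ⊤ := fun hx => hy.1 (by simp only [hx, EReal.top_add_coe])
  rw [mem_fsub_iff_forall_eventually_le hy.1
    (EReal.add_ne_bot_iff.mpr ⟨hx_bot, EReal.coe_ne_bot _⟩)] at hy
  refine (mem_fsub_iff_forall_eventually_le hx_top hx_bot).mpr fun ε hε => ?_
  have hk_le := (hasGradientAt_iff_isLittleO.mp hk).def (half_pos hε)
  filter_upwards [hy (ε / 2) (half_pos hε), hk_le] with z hφkz hkz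
  have hk_upper : k z - k x - ⟪v, z - x⟫ ≤ ε / 2 * ‖z - x‖ := (le_abs_self _).trans hkz
  refine (EReal.addLECancellable_coe (k z)).add_le_add_iff_right.mp (le_trans ?_ hφkz)
  rw [add_assoc, add_assoc, ← EReal.coe_add, ← EReal.coe_add]
  refine add_le_add_right (EReal.coe_le_coe_iff.mpr ?_) (φ x)
  rw [inner_sub_left]
  linarith

end FrechetSubdifferential

section Dinkelbach

variable {n : ℕ} {f : EuclideanSpace ℝ (Fin n) → EReal} {g h : EuclideanSpace ℝ (Fin n) → ℝ}
  {x z : EuclideanSpace ℝ (Fin n)}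

theorem Ffrac_of_ne (hg : g x ≠ 0) (hf : f x ≠ ⊤) :
    Ffrac f g h x = (((f x).toReal + h x) / g x : ℝ) :=
  if_pos ⟨hg, hf⟩

theorem coe_toReal_Ffrac (hg : g x ≠ 0) (hf : f x ≠ ⊤) :
    ((Ffrac f g h x).toReal : EReal) = Ffrac f g h x := by
  rw [Ffrac_of_ne hg hf, EReal.toReal_coe]

theorem add_coe_sub_toReal_Ffrac_mul_eq_zero (hg : g x ≠ 0) (hf_top : f x ≠ ⊤)
    (hf_bot : f x ≠ ⊥) :
    f x + ((h x - (Ffrac f g h x).toReal * g x : ℝ) : EReal) = 0 := by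
  rw [Ffrac_of_ne hg hf_top, EReal.toReal_coe, div_mul_cancel₀ _ hg]
  lift f x to ℝ using ⟨hf_top, hf_bot⟩ with a
  norm_cast
  rw [EReal.toReal_coe]
  ring

theorem toReal_Ffrac_nonneg (hg : 0 < g x) (hf : f x ≠ ⊤) (hfh : 0 ≤ f x + (h x : EReal)) :
    0 ≤ (Ffrac f g h x).toReal := by
  rw [Ffrac_of_ne hg.ne' hf, EReal.toReal_coe]
  lift f x to ℝ using ⟨hf, ne_bot_of_zero_le_add_coe hfh⟩ with a
  exact div_nonneg (by exact_mod_cast hfh) hg.le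

theorem zero_le_add_coe_sub_mul_of_le_Ffrac {c : ℝ} (hfh : 0 ≤ f z + (h z : EReal))
    (hg_pos : f z ≠ ⊤ → g z ≠ 0 → 0 < g z) (hc : c ≤ Ffrac f g h z) :
    0 ≤ f z + ((h z - c * g z : ℝ) : EReal) := by
  rcases eq_or_ne (f z) ⊤ with hf | hf
  · rw [hf, EReal.top_add_coe]
    exact le_top
  rcases eq_or_ne (g z) 0 with hg | hg
  · simpa [hg] using hfh
  rw [Ffrac_of_ne hg hf, EReal.coe_le_coe_iff, le_div_iff₀ (hg_pos hf hg)] at hc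
  lift f z to ℝ using ⟨hf, ne_bot_of_zero_le_add_coe hfh⟩ with a
  rw [EReal.toReal_coe] at hc
  norm_cast
  linarith

theorem isLocalMin_add_coe_sub_mul_of_isLocalMin_Ffrac (hfh : ∀ z, 0 ≤ f z + (h z : EReal))
    (hg_pos : ∀ z, f z ≠ ⊤ → g z ≠ 0 → 0 < g z) (hg : g x ≠ 0) (hf : f x ≠ ⊤)
    (hmin : IsLocalMin (Ffrac f g h) x) :
    IsLocalMin (fun z => f z + ((h z - (Ffrac f g h x).toReal * g z : ℝ) : EReal)) x := by
  filter_upwards [hmin] with z hz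
  rw [add_coe_sub_toReal_Ffrac_mul_eq_zero hg hf (ne_bot_of_zero_le_add_coe (hfh x))]
  exact zero_le_add_coe_sub_mul_of_le_Ffrac (hfh z) (hg_pos z)
    ((coe_toReal_Ffrac hg hf).trans_le hz)

end Dinkelbach

theorem isLocalMin_add_coe_sub_mul_inner_of_mem_csub {n : ℕ} {f : EuclideanSpace ℝ (Fin n) → EReal}
    {g h : EuclideanSpace ℝ (Fin n) → ℝ} {x y : EuclideanSpace ℝ (Fin n)} {c : ℝ} (hc : 0 ≤ c)
    (hy : y ∈ csub g x) (hmin : IsLocalMin (fun z => f z + ((h z - c * g z : ℝ) : EReal)) x) :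
    IsLocalMin (fun z => f z + ((h z - c * ⟪y, z⟫ : ℝ) : EReal)) x := by
  refine isLocalMin_add_coe_of_sub_le_sub hmin (.of_forall fun z => ?_)
  have hsubgradient : c * (g x + (⟪y, z⟫ - ⟪y, x⟫)) ≤ c * g z := by
    rw [← inner_sub_right]
    exact mul_le_mul_of_nonneg_left (hy z) hc
  linarith

theorem first_order_necessary_condition_general
    {n : ℕ} {f : EuclideanSpace ℝ (Fin n) → EReal} {g h : EuclideanSpace ℝ (Fin n) → ℝ}
    {x v : EuclideanSpace ℝ (Fin n)}
    (hfh : ∀ z, 0 ≤ f z + (h z : EReal)) (hg_pos : ∀ z, f z ≠ ⊤ → g z ≠ 0 → 0 < g z)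
    (hg : g x ≠ 0) (hf : f x ≠ ⊤) (hh : HasGradientAt h v x)
    (hmin : IsLocalMin (Ffrac f g h) x) :
    ∀ y ∈ csub g x, (Ffrac f g h x).toReal • y - v ∈ fsub f x := by
  intro y hy
  set c := (Ffrac f g h x).toReal
  have hf_bot : f x ≠ ⊥ := ne_bot_of_zero_le_add_coe (hfh x)
  have hc : 0 ≤ c := toReal_Ffrac_nonneg (hg_pos x hf hg) hf (hfh x)
  have hmin_affine : IsLocalMin (fun z => f z + ((h z - c * ⟪y, z⟫ : ℝ) : EReal)) x :=
    isLocalMin_add_coe_sub_mul_inner_of_mem_csub hc hy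
      (isLocalMin_add_coe_sub_mul_of_isLocalMin_Ffrac hfh hg_pos hg hf hmin)
  have hfermat : 0 ∈ fsub (fun z => f z + ((h z - c * ⟪y, z⟫ : ℝ) : EReal)) x :=
    zero_mem_fsub_of_isLocalMin (EReal.add_ne_top hf (EReal.coe_ne_top _))
      (EReal.add_ne_bot_iff.mpr ⟨hf_bot, EReal.coe_ne_bot _⟩) hmin_affine
  rw [← neg_sub v, ← zero_sub]
  exact sub_mem_fsub_of_mem_fsub_add hf_bot (hasGradientAt_sub_mul_inner hh c y) hfermat

/-- Theorem 3.3: first-order necessary optimality condition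
c⋆·∂g(x⋆) ⊆ ∂̂f(x⋆) + ∇h(x⋆) at a local minimizer x⋆ of F. -/
theorem first_order_necessary_condition
    {n : ℕ} (hn : 1 ≤ n)
    (f : EuclideanSpace ℝ (Fin n) → EReal) (g h : EuclideanSpace ℝ (Fin n) → ℝ)
    (h' : EuclideanSpace ℝ (Fin n) → EuclideanSpace ℝ (Fin n)) (L : ℝ)
    (hf_ne_bot : ∀ z, f z ≠ ⊥) (hf_proper : ∃ z, f z ≠ ⊤)
    (hf_lsc : LowerSemicontinuous f)
    (hf_bdd : ∃ m : ℝ, ∀ z, (m : EReal) ≤ f z)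
    (hf_cont : ContinuousOn f {z | f z ≠ ⊤})
    (hg_cvx : ConvexOn ℝ Set.univ g)
    (hL : 0 < L)
    (hh_grad : ∀ z, HasGradientAt h (h' z) z)
    (hh_lip : LipschitzWith (Real.toNNReal L) h')
    (hΩ : ∃ z, g z ≠ 0)
    (hfh : ∀ z, 0 ≤ f z + ((h z : ℝ) : EReal))
    (hg_pos : ∀ z, f z ≠ ⊤ → g z ≠ 0 → 0 < g z)
    (xs : EuclideanSpace ℝ (Fin n)) (hxs : g xs ≠ 0 ∧ f xs ≠ ⊤)
    (cs : ℝ) (hcs : cs = (Ffrac f g h xs).toReal)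
    (hmin : ∃ δ > (0 : ℝ), ∀ x, ‖x - xs‖ < δ → Ffrac f g h xs ≤ Ffrac f g h x) :
    ∀ ys ∈ csub g xs, cs • ys - h' xs ∈ fsub f xs := by
  obtain ⟨δ, hδ, hδ_min⟩ := hmin
  have hmin : IsLocalMin (Ffrac f g h) xs :=
    Metric.eventually_nhds_iff.mpr ⟨δ, hδ, fun x hx => hδ_min x (dist_eq_norm x xs ▸ hx)⟩
  exact hcs ▸ first_order_necessary_condition_general hfh hg_pos hxs.1 hxs.2 (hh_grad xs) hmin
end
end

section
/- Suppose the standing assumptions on f, g, h, Ω, F hold together with Assumption 1. Then F is lower semicontinuous on ℝⁿ. -/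
open Filter Topology
open scoped RealInnerProductSpace

noncomputable section

/-! Because `f + h ≥ 0`, the objective can be read as a quotient in `[0, ∞]`. There `a / 0 = ∞`
for `a ≠ 0` and `∞ / b = ∞` for `b ≠ ∞`, so division already produces the value `+∞` off
`Ω ∩ dom f`, the only exception being `0 / 0 = 0`, which Assumption 1 rules out. In `[0, ∞]` the
quotient of a lower semicontinuous function by an upper semicontinuous one is always lower
semicontinuous. -/

open scoped ENNReal

section Semicontinuity

variable {X : Type*} [TopologicalSpace X]

theorem lowerSemicontinuous_ennreal_mul {u v : X → ℝ≥0∞} (hu : LowerSemicontinuous u)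
    (hv : LowerSemicontinuous v) : LowerSemicontinuous fun x => u x * v x :=
  lowerSemicontinuous_iff_le_liminf.2 fun x =>
    (mul_le_mul' (hu.le_liminf x) (hv.le_liminf x)).trans ENNReal.le_liminf_mul

theorem lowerSemicontinuous_ennreal_div {u v : X → ℝ≥0∞} (hu : LowerSemicontinuous u)
    (hv : UpperSemicontinuous v) : LowerSemicontinuous fun x => u x / v x := by
  simp only [div_eq_mul_inv]
  exact lowerSemicontinuous_ennreal_mul hu
    (continuous_inv.comp_upperSemicontinuous_antitone hv ENNReal.inv_strictAnti.antitone)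

theorem lowerSemicontinuous_ereal_add {u v : X → EReal} (hu : LowerSemicontinuous u)
    (hv : LowerSemicontinuous v) : LowerSemicontinuous fun x => u x + v x := by
  intro x
  by_cases hu_bot : u x = ⊥
  · simp [SemicontinuousAt, hu_bot]
  by_cases hv_bot : v x = ⊥
  · simp [SemicontinuousAt, hv_bot]
  exact LowerSemicontinuousAt.add' (hu x) (hv x)
    (EReal.continuousAt_add (.inr hv_bot) (.inl hu_bot))

end Semicontinuity

section FractionalObjective

variable {X : Type*}

/-- The fractional objective `(f + h) / g` on `{g ≠ 0} ∩ dom f`, extended by `⊤`, over an arbitrary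
type `X`; for `X = ℝⁿ` it is definitionally `Ffrac`. -/
def fractionalObjective (f : X → EReal) (g h : X → ℝ) : X → EReal :=
  fun x => if g x ≠ 0 ∧ f x ≠ ⊤ then ((((f x).toReal + h x) / g x : ℝ) : EReal) else ⊤

theorem fractionalObjective_eq_coe_toENNReal_div_ofReal {f : X → EReal} {g h : X → ℝ} {x : X}
    (hfh : 0 ≤ f x + (h x : EReal)) (hg_pos : f x ≠ ⊤ → g x ≠ 0 → 0 < g x)
    (hne : g x = 0 → f x + (h x : EReal) ≠ 0) :
    fractionalObjective f g h x =
      (((f x + (h x : EReal)).toENNReal / ENNReal.ofReal (g x) : ℝ≥0∞) : EReal) := by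
  by_cases hf_top : f x = ⊤
  · simp [fractionalObjective, hf_top, ENNReal.top_div_of_ne_top]
  by_cases hg_zero : g x = 0
  · have numerator_ne_zero : (f x + (h x : EReal)).toENNReal ≠ 0 :=
      EReal.toENNReal_ne_zero_iff.2 (hfh.lt_of_ne' (hne hg_zero))
    simp [fractionalObjective, hg_zero, ENNReal.div_zero numerator_ne_zero]
  have hg : 0 < g x := hg_pos hf_top hg_zero
  have hf_bot : f x ≠ ⊥ := by
    intro hbot
    simp [hbot] at hfh
  obtain ⟨a, ha⟩ : ∃ a : ℝ, (a : EReal) = f x := ⟨_, EReal.coe_toReal hf_top hf_bot⟩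
  have numerator_nonneg : 0 ≤ a + h x := by
    rw [← ha] at hfh
    exact_mod_cast hfh
  have numerator_eq : (f x + (h x : EReal)).toENNReal = ENNReal.ofReal (a + h x) := by
    rw [← ha, ← EReal.coe_add, EReal.real_coe_toENNReal]
  rw [fractionalObjective, if_pos ⟨hg_zero, hf_top⟩, numerator_eq,
    ← ENNReal.ofReal_div_of_pos hg, EReal.coe_ennreal_ofReal,
    max_eq_left (div_nonneg numerator_nonneg hg.le), ← ha, EReal.toReal_coe]

theorem Ffrac_lowerSemicontinuous_general [TopologicalSpace X] {f : X → EReal} {g h : X → ℝ}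
    (hf_lsc : LowerSemicontinuous f) (hg_usc : UpperSemicontinuous g)
    (hh_lsc : LowerSemicontinuous h) (hfh : ∀ z, 0 ≤ f z + (h z : EReal))
    (hg_pos : ∀ z, f z ≠ ⊤ → g z ≠ 0 → 0 < g z) (hA1 : ∀ z, g z = 0 → f z + (h z : EReal) ≠ 0) :
    LowerSemicontinuous (fractionalObjective f g h) := by
  have coe_h_lsc : LowerSemicontinuous fun z => (h z : EReal) :=
    continuous_coe_real_ereal.comp_lowerSemicontinuous hh_lsc EReal.coe_strictMono.monotone
  have numerator_lsc : LowerSemicontinuous fun z => (f z + (h z : EReal)).toENNReal :=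
    EReal.continuous_toENNReal.comp_lowerSemicontinuous
      (lowerSemicontinuous_ereal_add hf_lsc coe_h_lsc) fun _ _ => EReal.toENNReal_le_toENNReal
  have denominator_usc : UpperSemicontinuous fun z => ENNReal.ofReal (g z) :=
    ENNReal.continuous_ofReal.comp_upperSemicontinuous hg_usc ENNReal.ofReal_mono
  have objective_eq_div : fractionalObjective f g h =
      fun z => (((f z + (h z : EReal)).toENNReal / ENNReal.ofReal (g z) : ℝ≥0∞) : EReal) :=
    funext fun z =>
      fractionalObjective_eq_coe_toENNReal_div_ofReal (hfh z) (hg_pos z) (hA1 z)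
  rw [objective_eq_div]
  exact continuous_coe_ennreal_ereal.comp_lowerSemicontinuous
    (lowerSemicontinuous_ennreal_div numerator_lsc denominator_usc)
    EReal.coe_ennreal_strictMono.monotone

end FractionalObjective

/-- Proposition 4.4: under Assumption 1, F is lower semicontinuous. -/
theorem Ffrac_lowerSemicontinuous
    {n : ℕ} (hn : 1 ≤ n)
    (f : EuclideanSpace ℝ (Fin n) → EReal) (g h : EuclideanSpace ℝ (Fin n) → ℝ)
    (h' : EuclideanSpace ℝ (Fin n) → EuclideanSpace ℝ (Fin n)) (L : ℝ)
    (hf_ne_bot : ∀ z, f z ≠ ⊥) (hf_proper : ∃ z, f z ≠ ⊤)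
    (hf_lsc : LowerSemicontinuous f)
    (hf_bdd : ∃ m : ℝ, ∀ z, (m : EReal) ≤ f z)
    (hf_cont : ContinuousOn f {z | f z ≠ ⊤})
    (hg_cvx : ConvexOn ℝ Set.univ g)
    (hL : 0 < L)
    (hh_grad : ∀ z, HasGradientAt h (h' z) z)
    (hh_lip : LipschitzWith (Real.toNNReal L) h')
    (hΩ : ∃ z, g z ≠ 0)
    (hfh : ∀ z, 0 ≤ f z + ((h z : ℝ) : EReal))
    (hg_pos : ∀ z, f z ≠ ⊤ → g z ≠ 0 → 0 < g z)
    (hA1 : ∀ z, g z = 0 → f z + ((h z : ℝ) : EReal) ≠ 0) :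
    LowerSemicontinuous (Ffrac f g h) := by
  have hg_cont : Continuous g := continuousOn_univ.1 (hg_cvx.continuousOn isOpen_univ)
  have hh_cont : Continuous h := continuous_iff_continuousAt.2 fun z => (hh_grad z).continuousAt
  exact Ffrac_lowerSemicontinuous_general hf_lsc hg_cont.upperSemicontinuous
    hh_cont.lowerSemicontinuous hfh hg_pos hA1
end
end

section
/- Suppose the standing assumptions on f, g, h, Ω, F hold together with Assumption 1, and let (x^k), (y^k), (c_k), (α_k) be generated by PGSA. If x⋆ ∈ ℝⁿ is an accumulation point of (x^k) (i.e., some subsequence of (x^k) converges to x⋆), then x⋆ ∈ dom(F) and there exists y⋆ ∈ ∂g(x⋆) such that F(x⋆)·y⋆ − ∇h(x⋆) ∈ ∂̂f(x⋆); that is, x⋆ is a critical point of F. -/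
open Filter Topology
open scoped RealInnerProductSpace

noncomputable section

/-!
A point `p` of the prox of `a f` at `u` carries the quadratic minorant
`f z ≥ f p + ⟨(u - p) / a, z - p⟩ - ‖z - p‖² / (2 a)`, that is, `(u - p) / a` is a proximal
subgradient of `f` at `p`. Evaluating the minorant of `x (k + 1)` at `z = x k` and combining it
with the descent lemma for `h` and the subgradient inequality for `g` shows that `c k`
decreases, by an amount controlled by `‖x (k + 1) - x k‖²`. Hence `c` converges and consecutive
iterates approach each other along any subnet of `x (k + 1)` converging to `x⋆`. Proximal
subgradients with a uniform constant are stable under limits when `f` is lower semicontinuous,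
and `f` converges along such limits, so the minorants pass to the limit, where they give a
Fréchet subgradient, and `c` tends to `F x⋆`.
-/

open scoped NNReal

theorem le_of_tendsto_of_lowerSemicontinuousAt {X ι β : Type*} [TopologicalSpace X]
    [LinearOrder β] [TopologicalSpace β] [ClosedIciTopology β] [DenselyOrdered β]
    {f : X → β} {x : X} (hf : LowerSemicontinuousAt f x) {l : Filter ι} [NeBot l]
    {u : ι → X} {b : ι → β} {B : β} (hu : Tendsto u l (𝓝 x)) (hb : Tendsto b l (𝓝 B))
    (hub : ∀ᶠ i in l, f (u i) ≤ b i) : f x ≤ B :=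
  le_of_forall_lt_imp_le_of_dense fun _ hlt =>
    ge_of_tendsto hb <| ((hu.eventually (hf _ hlt)).and hub).mono fun _ hi => hi.1.le.trans hi.2

theorem tendsto_const_sub_coe_ereal {ι : Type*} {l : Filter ι} {r : ι → ℝ} {s : ℝ} (a : EReal)
    (hr : Tendsto r l (𝓝 s)) : Tendsto (fun i => a - (r i : EReal)) l (𝓝 (a - (s : EReal))) := by
  have hneg : Tendsto (fun i => -(r i : EReal)) l (𝓝 (-(s : EReal))) := by
    exact_mod_cast EReal.tendsto_coe.2 hr.neg
  have hadd : ContinuousAt (fun p : EReal × EReal => p.1 + p.2) (a, -(s : EReal)) :=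
    EReal.continuousAt_add (.inr (EReal.coe_ne_bot (-s))) (.inr (EReal.coe_ne_top (-s)))
  exact hadd.tendsto.comp (tendsto_const_nhds.prodMk_nhds hneg)

theorem mapClusterPt_atTop_comp_succ_iff {X : Type*} [TopologicalSpace X] {u : ℕ → X} {a : X} :
    MapClusterPt a atTop (fun k => u (k + 1)) ↔ MapClusterPt a atTop u := by
  have hcomp := mapClusterPt_comp (X := X) (x := a) (F := atTop) (φ := (· + 1)) (u := u)
  rwa [map_add_atTop_eq_nat] at hcomp

section ProximalSubgradient

variable {E : Type*} [NormedAddCommGroup E] [InnerProductSpace ℝ E]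

/-- `v` is a (global) proximal subgradient of `f` at `x` with constant `ρ`: the function `f` lies
above the concave parabola `z ↦ f x + ⟪v, z - x⟫ - ρ ‖z - x‖²` touching it at `x`. Only real numbers
are added to `f x`, so no sum `⊤ + ⊥` occurs; `f x = ⊤` is allowed only when `f` is constantly
`⊤`. -/
def IsProximalSubgradient (f : E → EReal) (ρ : ℝ) (x v : E) : Prop :=
  ∀ z, f x + ((⟪v, z - x⟫ - ρ * ‖z - x‖ ^ 2 : ℝ) : EReal) ≤ f z

namespace IsProximalSubgradient

variable {f : E → EReal} {ρ : ℝ} {x v : E}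

theorem mono {ρ' : ℝ} (hv : IsProximalSubgradient f ρ x v) (hρ : ρ ≤ ρ') :
    IsProximalSubgradient f ρ' x v := fun z => by
  refine le_trans (add_le_add_right (EReal.coe_le_coe_iff.2 ?_) _) (hv z)
  gcongr

theorem le_sub (hv : IsProximalSubgradient f ρ x v) (z : E) :
    f x ≤ f z - ((⟪v, z - x⟫ - ρ * ‖z - x‖ ^ 2 : ℝ) : EReal) :=
  (EReal.le_sub_iff_add_le (.inl (EReal.coe_ne_bot _)) (.inl (EReal.coe_ne_top _))).2 (hv z)

theorem ne_top (hv : IsProximalSubgradient f ρ x v) {z : E} (hz : f z ≠ ⊤) : f x ≠ ⊤ := by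
  intro hx
  have hle := hv z
  rw [hx, EReal.top_add_coe, top_le_iff] at hle
  exact hz hle

theorem toReal_add_le (hv : IsProximalSubgradient f ρ x v) {z : E} (hx : f x ≠ ⊥) (hz : f z ≠ ⊤) :
    (f x).toReal + ⟪v, z - x⟫ - ρ * ‖z - x‖ ^ 2 ≤ (f z).toReal := by
  have hle := EReal.toReal_le_toReal (hv z)
    (mt EReal.add_eq_bot_iff.1 (not_or.2 ⟨hx, EReal.coe_ne_bot _⟩)) hz
  rw [EReal.toReal_add (hv.ne_top hz) hx (EReal.coe_ne_top _) (EReal.coe_ne_bot _),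
    EReal.toReal_coe] at hle
  linarith

section Limits

variable {ι : Type*} {l : Filter ι} {u w : ι → E}

theorem of_tendsto [NeBot l] (hf : LowerSemicontinuousAt f x) (hu : Tendsto u l (𝓝 x))
    (hw : Tendsto w l (𝓝 v)) (h : ∀ i, IsProximalSubgradient f ρ (u i) (w i)) :
    IsProximalSubgradient f ρ x v := by
  intro z
  have hzu : Tendsto (fun i => z - u i) l (𝓝 (z - x)) := hu.const_sub z
  have hparabola : Tendsto (fun i => ⟪w i, z - u i⟫ - ρ * ‖z - u i‖ ^ 2) l
      (𝓝 (⟪v, z - x⟫ - ρ * ‖z - x‖ ^ 2)) :=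
    (hw.inner hzu).sub ((hzu.norm.pow 2).const_mul ρ)
  exact EReal.add_le_of_le_sub <| le_of_tendsto_of_lowerSemicontinuousAt hf hu
    (tendsto_const_sub_coe_ereal (f z) hparabola) (.of_forall fun i => (h i).le_sub z)

theorem tendsto_apply (hf : LowerSemicontinuousAt f x) (hu : Tendsto u l (𝓝 x))
    (hw : Tendsto w l (𝓝 v)) (h : ∀ i, IsProximalSubgradient f ρ (u i) (w i)) :
    Tendsto (fun i => f (u i)) l (𝓝 (f x)) := by
  have hxu : Tendsto (fun i => x - u i) l (𝓝 0) := by simpa using hu.const_sub x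
  have hparabola : Tendsto (fun i => ⟪w i, x - u i⟫ - ρ * ‖x - u i‖ ^ 2) l (𝓝 0) := by
    simpa using (hw.inner (𝕜 := ℝ) hxu).sub ((hxu.norm.pow 2).const_mul ρ)
  have hupper : Tendsto (fun i => f x - ((⟪w i, x - u i⟫ - ρ * ‖x - u i‖ ^ 2 : ℝ) : EReal)) l
      (𝓝 (f x)) := by
    simpa using tendsto_const_sub_coe_ereal (f x) hparabola
  exact tendsto_order.2 ⟨fun b hb => hu.eventually (hf b hb), fun b hb =>
    (hupper.eventually_lt_const hb).mono fun i hi => ((h i).le_sub x).trans_lt hi⟩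

end Limits

end IsProximalSubgradient

end ProximalSubgradient

section DescentLemma

variable {E : Type*} [NormedAddCommGroup E] [InnerProductSpace ℝ E] [CompleteSpace E]
  {h : E → ℝ} {h' : E → E}

theorem hasDerivAt_comp_add_smul_of_hasGradientAt (hh : ∀ z, HasGradientAt h (h' z) z) (x d : E)
    (t : ℝ) : HasDerivAt (fun s : ℝ => h (x + s • d)) ⟪h' (x + t • d), d⟫ t := by
  have hline : HasDerivAt (fun s : ℝ => x + s • d) d t := by
    simpa using ((hasDerivAt_id t).smul_const d).const_add x
  exact (hh (x + t • d)).hasFDerivAt.comp_hasDerivAt t hline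

theorem le_add_inner_add_sq_of_lipschitzWith_gradient {K : ℝ≥0}
    (hh : ∀ z, HasGradientAt h (h' z) z) (hLip : LipschitzWith K h') (x z : E) :
    h z ≤ h x + ⟪h' x, z - x⟫ + K / 2 * ‖z - x‖ ^ 2 := by
  set d := z - x with hd
  have hgap_deriv (t : ℝ) :
      HasDerivAt (fun t : ℝ => h (x + t • d) - t * ⟪h' x, d⟫ - K / 2 * ‖d‖ ^ 2 * t ^ 2)
        (⟪h' (x + t • d) - h' x, d⟫ - K * ‖d‖ ^ 2 * t) t := by
    refine (((hasDerivAt_comp_add_smul_of_hasGradientAt hh x d t).sub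
      ((hasDerivAt_id t).mul_const ⟪h' x, d⟫)).sub
      (((hasDerivAt_id t).pow 2).const_mul (K / 2 * ‖d‖ ^ 2))).congr_deriv ?_
    rw [inner_sub_left]
    simp only [id]
    ring
  have hgap_deriv_nonpos {t : ℝ} (ht : 0 ≤ t) :
      ⟪h' (x + t • d) - h' x, d⟫ - K * ‖d‖ ^ 2 * t ≤ 0 := sub_nonpos.2 <| calc
    ⟪h' (x + t • d) - h' x, d⟫ ≤ ‖h' (x + t • d) - h' x‖ * ‖d‖ := real_inner_le_norm _ _
    _ ≤ K * ‖x + t • d - x‖ * ‖d‖ := by gcongr; exact hLip.norm_sub_le _ _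
    _ = K * ‖d‖ ^ 2 * t := by
      rw [add_sub_cancel_left, norm_smul, Real.norm_of_nonneg ht]; ring
  have hgap_anti := antitoneOn_of_hasDerivWithinAt_nonpos (convex_Icc (0 : ℝ) 1)
    (fun t _ => (hgap_deriv t).continuousAt.continuousWithinAt)
    (fun t _ => (hgap_deriv t).hasDerivWithinAt)
    (fun t ht => hgap_deriv_nonpos (interior_subset ht).1)
  have hgap_one_le_zero := hgap_anti (Set.left_mem_Icc.2 zero_le_one)
    (Set.right_mem_Icc.2 zero_le_one) zero_le_one
  simp only [one_smul, zero_smul, add_zero, hd, add_sub_cancel] at hgap_one_le_zero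
  linarith

end DescentLemma

local notation "ℝ^" n:max => EuclideanSpace ℝ (Fin n)

section ConvexSubdifferential

variable {n : ℕ} {g : ℝ^n → ℝ}

theorem mul_norm_le_sub_of_mem_csub {x y : ℝ^n} {r M : ℝ} (hr : 0 ≤ r) (hy : y ∈ csub g x)
    (hM : ∀ z ∈ Metric.closedBall x r, g z ≤ M) : r * ‖y‖ ≤ M - g x := by
  have hmem : x + (r * ‖y‖⁻¹) • y ∈ Metric.closedBall x r := by
    rw [mem_closedBall_iff_norm, add_sub_cancel_left, norm_smul,
      Real.norm_of_nonneg (by positivity), mul_assoc]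
    exact mul_le_of_le_one_right hr inv_mul_le_one
  have hinner : ⟪y, (r * ‖y‖⁻¹) • y⟫ = r * ‖y‖ := by
    rw [inner_smul_right, real_inner_self_eq_norm_sq]
    rcases eq_or_ne ‖y‖ 0 with hy0 | hy0
    · simp [hy0]
    · field_simp
  have hsubgrad := hy (x + (r * ‖y‖⁻¹) • y)
  rw [add_sub_cancel_left, hinner] at hsubgrad
  linarith [hM _ hmem]

theorem exists_eventually_forall_mem_csub_norm_le {x : ℝ^n} (hg : ContinuousAt g x) :
    ∃ M, ∀ᶠ z in 𝓝 x, ∀ y ∈ csub g z, ‖y‖ ≤ M := by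
  obtain ⟨r, hr, hball⟩ := Metric.nhds_basis_closedBall.eventually_iff.1
    (hg.eventually_le_const (lt_add_one (g x)))
  refine ⟨2 / (r / 2), ?_⟩
  filter_upwards [Metric.closedBall_mem_nhds x (half_pos hr),
    hg.eventually_const_le (sub_one_lt (g x))] with z hz hgz y hy
  have hM : ∀ w ∈ Metric.closedBall z (r / 2), g w ≤ g x + 1 := fun w hw =>
    hball (Metric.closedBall_subset_closedBall' (by linarith [Metric.mem_closedBall.1 hz]) hw)
  rw [le_div_iff₀' (half_pos hr)]
  linarith [mul_norm_le_sub_of_mem_csub (half_pos hr).le hy hM]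

theorem mem_csub_of_tendsto {ι : Type*} {l : Filter ι} [NeBot l] {u v : ι → ℝ^n} {x y : ℝ^n}
    (hg : ContinuousAt g x) (hu : Tendsto u l (𝓝 x)) (hv : Tendsto v l (𝓝 y))
    (hmem : ∀ i, v i ∈ csub g (u i)) : y ∈ csub g x := fun z =>
  le_of_tendsto' ((hg.tendsto.comp hu).add (hv.inner (hu.const_sub z))) fun i => hmem i z

theorem exists_mem_csub_tendsto_ultrafilter {ι : Type*} {𝒰 : Ultrafilter ι} {u v : ι → ℝ^n}
    {x : ℝ^n} (hg : ContinuousAt g x) (hu : Tendsto u 𝒰 (𝓝 x)) (hmem : ∀ i, v i ∈ csub g (u i)) :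
    ∃ y ∈ csub g x, Tendsto v 𝒰 (𝓝 y) := by
  obtain ⟨M, hM⟩ := exists_eventually_forall_mem_csub_norm_le hg
  have hbdd : ∀ᶠ i in 𝒰, v i ∈ Metric.closedBall (0 : ℝ^n) M :=
    (hu.eventually hM).mono fun i hi => mem_closedBall_zero_iff.2 (hi _ (hmem i))
  obtain ⟨y, -, hy⟩ := (isCompact_closedBall (0 : ℝ^n) M).ultrafilter_le_nhds (𝒰.map v)
    (le_principal_iff.2 hbdd)
  exact ⟨y, mem_csub_of_tendsto hg hu hy hmem, hy⟩

end ConvexSubdifferential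

section ProxAndFrechetSubdifferential

variable {n : ℕ} {f : ℝ^n → EReal}

theorem IsProximalSubgradient.mem_fsub {ρ : ℝ} {x v : ℝ^n}
    (hv : IsProximalSubgradient f ρ x v) (htop : f x ≠ ⊤) (hbot : f x ≠ ⊥) : v ∈ fsub f x := by
  refine ⟨htop, ?_⟩
  rcases (𝓝[≠] x).eq_or_neBot with hisolated | _
  · simp [hisolated]
  have hlower : Tendsto (fun z => ((-ρ * ‖z - x‖ : ℝ) : EReal)) (𝓝[≠] x) (𝓝 0) := by
    have hcont : Continuous fun z => -ρ * ‖z - x‖ := by fun_prop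
    exact EReal.tendsto_coe.2 ((hcont.tendsto' x 0 (by simp)).mono_left nhdsWithin_le_nhds)
  rw [← hlower.liminf_eq]
  refine liminf_le_liminf ?_
  filter_upwards [self_mem_nhdsWithin] with z hz
  have hpos : 0 < ‖z - x‖ := norm_sub_pos_iff.2 hz
  rw [EReal.le_div_iff_mul_le (EReal.coe_pos.2 hpos) (EReal.coe_ne_top _), ← EReal.coe_mul]
  have hle := hv z
  lift f x to ℝ using ⟨htop, hbot⟩ with a
  rw [EReal.le_sub_iff_add_le (.inl (EReal.coe_ne_bot _)) (.inl (EReal.coe_ne_top _)),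
    EReal.le_sub_iff_add_le (.inl (EReal.coe_ne_bot _)) (.inl (EReal.coe_ne_top _))]
  refine le_of_eq_of_le ?_ hle
  norm_cast
  ring

theorem isProximalSubgradient_of_mem_proxSet {a : ℝ} {u p : ℝ^n} (ha : 0 < a)
    (hp : p ∈ proxSet (fun z => (a : EReal) * f z) u) :
    IsProximalSubgradient f (a⁻¹ / 2) p (a⁻¹ • (u - p)) := by
  intro z
  have hexpand : a * (⟪a⁻¹ • (u - p), z - p⟫ - a⁻¹ / 2 * ‖z - p‖ ^ 2)
      = ‖p - u‖ ^ 2 / 2 - ‖z - u‖ ^ 2 / 2 := by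
    have hsq := norm_sub_sq_real (z - p) (u - p)
    rw [sub_sub_sub_cancel_right, real_inner_comm] at hsq
    rw [hsq, real_inner_smul_left, norm_sub_rev p u]
    field_simp
    ring
  have hscaled : (f p + ((⟪a⁻¹ • (u - p), z - p⟫ - a⁻¹ / 2 * ‖z - p‖ ^ 2 : ℝ) : EReal)) * a
      ≤ f z * a := by
    rw [mul_comm, EReal.left_distrib_of_nonneg_of_ne_top (EReal.coe_nonneg.2 ha.le)
      (EReal.coe_ne_top a), ← EReal.coe_mul, hexpand, EReal.coe_sub, ← add_sub_assoc,
      mul_comm (f z)]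
    exact EReal.sub_le_of_le_add (hp z)
  rwa [← EReal.le_div_iff_mul_le (EReal.coe_pos.2 ha) (EReal.coe_ne_top a), ← EReal.mul_div_right,
    EReal.div_mul_cancel (EReal.coe_ne_bot a) (EReal.coe_ne_top a) (EReal.coe_ne_zero.2 ha.ne')]
    at hscaled

end ProxAndFrechetSubdifferential

section PGSA

variable {n : ℕ}

/-- The assumptions on the fractional program `min (f + h) / g` under which PGSA is analysed, with
`h'` the gradient of `h` and `K` its Lipschitz constant. The field `numerator_ne_zero` is
Assumption 1. -/
structure IsFractionalProgram (f : ℝ^n → EReal) (g h : ℝ^n → ℝ) (h' : ℝ^n → ℝ^n) (K : ℝ≥0) :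
    Prop where
  lowerSemicontinuous : LowerSemicontinuous f
  continuous_denom : Continuous g
  hasGradientAt : ∀ z, HasGradientAt h (h' z) z
  lipschitzWith_gradient : LipschitzWith K h'
  numerator_nonneg : ∀ z, 0 ≤ f z + (h z : EReal)
  denom_pos : ∀ z, f z ≠ ⊤ → g z ≠ 0 → 0 < g z
  numerator_ne_zero : ∀ z, g z = 0 → f z + (h z : EReal) ≠ 0

/-- The iterates `x`, subgradients `y`, ratios `c` and step sizes `α` of a run of PGSA, with the
step sizes in `[αlo, αhi]`. As in the paper, `y` is shifted: `y (k + 1)` is a subgradient at `x k`,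
and `y 0` is arbitrary. -/
structure IsPGSASequence (f : ℝ^n → EReal) (g h : ℝ^n → ℝ) (h' : ℝ^n → ℝ^n) (αlo αhi : ℝ)
    (α : ℕ → ℝ) (x y : ℕ → ℝ^n) (c : ℕ → ℝ) : Prop where
  init_mem_dom : g (x 0) ≠ 0 ∧ f (x 0) ≠ ⊤
  stepLower_pos : 0 < αlo
  step_mem : ∀ k, αlo ≤ α k ∧ α k ≤ αhi
  mem_csub : ∀ k, y (k + 1) ∈ csub g (x k)
  ratio_eq : ∀ k, c k = ((f (x k)).toReal + h (x k)) / g (x k)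
  mem_proxSet : ∀ k, x (k + 1) ∈ proxSet (fun z => (α k : EReal) * f z)
    (x k - α k • h' (x k) + (α k * c k) • y (k + 1))

variable {f : ℝ^n → EReal} {g h : ℝ^n → ℝ} {h' : ℝ^n → ℝ^n} {K : ℝ≥0}

namespace IsFractionalProgram

variable {z : ℝ^n} (P : IsFractionalProgram f g h h' K)
include P

theorem ne_bot (z : ℝ^n) : f z ≠ ⊥ := by
  intro hbot
  simpa [hbot] using P.numerator_nonneg z

theorem coe_numerator (hz : f z ≠ ⊤) :
    (((f z).toReal + h z : ℝ) : EReal) = f z + (h z : EReal) := by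
  rw [EReal.coe_add, EReal.coe_toReal hz (P.ne_bot z)]

theorem toReal_numerator_nonneg (hz : f z ≠ ⊤) : 0 ≤ (f z).toReal + h z := by
  rw [← EReal.coe_nonneg, P.coe_numerator hz]
  exact P.numerator_nonneg z

theorem denom_ne_zero_of_numerator_nonpos (hz : f z ≠ ⊤) (hle : (f z).toReal + h z ≤ 0) :
    g z ≠ 0 := by
  intro hg
  apply P.numerator_ne_zero z hg
  rw [← P.coe_numerator hz, le_antisymm hle (P.toReal_numerator_nonneg hz), EReal.coe_zero]

theorem numerator_add_sq_le_of_isProximalSubgradient {a c : ℝ} {x y p : ℝ^n} (hc : 0 ≤ c)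
    (hx : f x ≠ ⊤) (hcg : c * g x = (f x).toReal + h x) (hy : y ∈ csub g x)
    (hp : IsProximalSubgradient f (a⁻¹ / 2) p (a⁻¹ • (x - p) - h' x + c • y)) :
    (f p).toReal + h p + (a⁻¹ - K) / 2 * ‖p - x‖ ^ 2 ≤ c * g p := by
  have hprox := hp.toReal_add_le (P.ne_bot p) hx
  have hdescent := le_add_inner_add_sq_of_lipschitzWith_gradient P.hasGradientAt
    P.lipschitzWith_gradient x p
  have hsubgrad := mul_le_mul_of_nonneg_left (hy p) hc
  rw [inner_add_left, inner_sub_left, real_inner_smul_left, real_inner_smul_left,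
    real_inner_self_eq_norm_sq, norm_sub_rev x p, ← neg_sub p x, inner_neg_right,
    inner_neg_right] at hprox
  linarith

end IsFractionalProgram

namespace IsPGSASequence

variable {αlo αhi : ℝ} {α : ℕ → ℝ} {x y : ℕ → ℝ^n} {c : ℕ → ℝ}

section

variable (S : IsPGSASequence f g h h' αlo αhi α x y c)
include S

theorem step_pos (k : ℕ) : 0 < α k := S.stepLower_pos.trans_le (S.step_mem k).1

theorem descent_const_pos (hαK : αhi * K < 1) : 0 < (αhi⁻¹ - K) / 2 := by
  have hαhi : 0 < αhi := (S.step_pos 0).trans_le (S.step_mem 0).2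
  have hK : (K : ℝ) < αhi⁻¹ := by rwa [← one_div, lt_div_iff₀' hαhi]
  linarith

theorem ratio_mul_denom {k : ℕ} (hg : g (x k) ≠ 0) :
    c k * g (x k) = (f (x k)).toReal + h (x k) := by
  rw [S.ratio_eq, div_mul_cancel₀ _ hg]

theorem isProximalSubgradient_succ (k : ℕ) : IsProximalSubgradient f ((α k)⁻¹ / 2) (x (k + 1))
    ((α k)⁻¹ • (x k - x (k + 1)) - h' (x k) + c k • y (k + 1)) := by
  convert isProximalSubgradient_of_mem_proxSet (S.step_pos k) (S.mem_proxSet k) using 1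
  match_scalars <;> field_simp [(S.step_pos k).ne']

theorem inv_step_le (k : ℕ) : (α k)⁻¹ ≤ αlo⁻¹ :=
  inv_anti₀ S.stepLower_pos (S.step_mem k).1

theorem isBoundedUnder_norm_inv_step (l : Filter ℕ) :
    IsBoundedUnder (· ≤ ·) l (fun k => ‖(α k)⁻¹‖) :=
  isBoundedUnder_of ⟨αlo⁻¹, fun k => by
    rw [Real.norm_of_nonneg (inv_pos.2 (S.step_pos k)).le]
    exact S.inv_step_le k⟩

end

variable (P : IsFractionalProgram f g h h' K) (S : IsPGSASequence f g h h' αlo αhi α x y c)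
  (hαK : αhi * K < 1)
include P S

theorem ratio_nonneg_of_mem_dom {k : ℕ} (hk : g (x k) ≠ 0 ∧ f (x k) ≠ ⊤) : 0 ≤ c k := by
  rw [S.ratio_eq]
  exact div_nonneg (P.toReal_numerator_nonneg hk.2) (P.denom_pos _ hk.2 hk.1).le

theorem numerator_add_sq_le {k : ℕ} (hk : g (x k) ≠ 0 ∧ f (x k) ≠ ⊤) :
    (f (x (k + 1))).toReal + h (x (k + 1)) + (αhi⁻¹ - K) / 2 * ‖x (k + 1) - x k‖ ^ 2
      ≤ c k * g (x (k + 1)) := by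
  have hstep : αhi⁻¹ ≤ (α k)⁻¹ := inv_anti₀ (S.step_pos k) (S.step_mem k).2
  refine le_trans ?_ (P.numerator_add_sq_le_of_isProximalSubgradient
    (S.ratio_nonneg_of_mem_dom P hk) hk.2 (S.ratio_mul_denom hk.1) (S.mem_csub k)
    (S.isProximalSubgradient_succ k))
  gcongr

include hαK

theorem mem_dom (k : ℕ) : g (x k) ≠ 0 ∧ f (x k) ≠ ⊤ := by
  induction k with
  | zero => exact S.init_mem_dom
  | succ k ih =>
    have htop : f (x (k + 1)) ≠ ⊤ := (S.isProximalSubgradient_succ k).ne_top ih.2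
    refine ⟨fun hg => ?_, htop⟩
    have hdescent := S.numerator_add_sq_le P ih
    have hsq : 0 ≤ (αhi⁻¹ - K) / 2 * ‖x (k + 1) - x k‖ ^ 2 :=
      mul_nonneg (S.descent_const_pos hαK).le (sq_nonneg _)
    rw [hg, mul_zero] at hdescent
    exact P.denom_ne_zero_of_numerator_nonpos htop (by linarith) hg

theorem sq_le_ratio_sub_mul (k : ℕ) :
    (αhi⁻¹ - K) / 2 * ‖x (k + 1) - x k‖ ^ 2 ≤ (c k - c (k + 1)) * g (x (k + 1)) := by
  have hdescent := S.numerator_add_sq_le P (S.mem_dom P hαK k)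
  rw [← S.ratio_mul_denom (S.mem_dom P hαK (k + 1)).1] at hdescent
  linarith

theorem antitone_ratio : Antitone c := by
  refine antitone_nat_of_succ_le fun k => sub_nonneg.1 ?_
  obtain ⟨hg, htop⟩ := S.mem_dom P hαK (k + 1)
  exact nonneg_of_mul_nonneg_left ((mul_nonneg (S.descent_const_pos hαK).le (sq_nonneg _)).trans
    (S.sq_le_ratio_sub_mul P hαK k)) (P.denom_pos _ htop hg)

theorem exists_tendsto_ratio : ∃ cs, Tendsto c atTop (𝓝 cs) :=
  ⟨_, tendsto_atTop_ciInf (S.antitone_ratio P hαK)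
    ⟨0, Set.forall_mem_range.2 fun k => S.ratio_nonneg_of_mem_dom P (S.mem_dom P hαK k)⟩⟩

section Limits

variable {l : Filter ℕ} {xs ys : ℝ^n} {cs : ℝ}

theorem tendsto_sub_succ (hl : l ≤ atTop) (hx : Tendsto (fun k => x (k + 1)) l (𝓝 xs)) :
    Tendsto (fun k => x k - x (k + 1)) l (𝓝 0) := by
  obtain ⟨cs, hc⟩ := S.exists_tendsto_ratio P hαK
  have hc_succ : Tendsto (fun k => c (k + 1)) atTop (𝓝 cs) := hc.comp (tendsto_add_atTop_nat 1)
  have hg : Tendsto (fun k => g (x (k + 1))) l (𝓝 (g xs)) :=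
    (P.continuous_denom.tendsto xs).comp hx
  have hbound :
      Tendsto (fun k => (c k - c (k + 1)) * g (x (k + 1)) / ((αhi⁻¹ - K) / 2)) l (𝓝 0) := by
    simpa using (((hc.sub hc_succ).mono_left hl).mul hg).div_const ((αhi⁻¹ - K) / 2)
  have hsq : Tendsto (fun k => ‖x k - x (k + 1)‖ ^ 2) l (𝓝 0) := by
    refine squeeze_zero (fun k => sq_nonneg _) (fun k => ?_) hbound
    rw [le_div_iff₀' (S.descent_const_pos hαK), norm_sub_rev]
    exact S.sq_le_ratio_sub_mul P hαK k
  rw [tendsto_zero_iff_norm_tendsto_zero]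
  simpa using hsq.sqrt

theorem tendsto_of_tendsto_succ (hl : l ≤ atTop) (hx : Tendsto (fun k => x (k + 1)) l (𝓝 xs)) :
    Tendsto x l (𝓝 xs) := by
  simpa using (S.tendsto_sub_succ P hαK hl hx).add hx

theorem tendsto_proximalSubgradient (hl : l ≤ atTop)
    (hx : Tendsto (fun k => x (k + 1)) l (𝓝 xs)) (hy : Tendsto (fun k => y (k + 1)) l (𝓝 ys))
    (hc : Tendsto c l (𝓝 cs)) :
    Tendsto (fun k => (α k)⁻¹ • (x k - x (k + 1)) - h' (x k) + c k • y (k + 1)) l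
      (𝓝 (cs • ys - h' xs)) := by
  have hsmall : Tendsto (fun k => (α k)⁻¹ • (x k - x (k + 1))) l (𝓝 0) :=
    (S.isBoundedUnder_norm_inv_step l).smul_tendsto_zero (S.tendsto_sub_succ P hαK hl hx)
  have hgrad : Tendsto (fun k => h' (x k)) l (𝓝 (h' xs)) :=
    (P.lipschitzWith_gradient.continuous.tendsto xs).comp (S.tendsto_of_tendsto_succ P hαK hl hx)
  simpa [neg_add_eq_sub] using (hsmall.sub hgrad).add (hc.smul hy)

theorem numerator_eq_of_tendsto [NeBot l] (hx : Tendsto (fun k => x (k + 1)) l (𝓝 xs))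
    (hc : Tendsto (fun k => c (k + 1)) l (𝓝 cs)) (hxs : f xs ≠ ⊤)
    (hf : Tendsto (fun k => f (x (k + 1))) l (𝓝 (f xs))) :
    (f xs).toReal + h xs = cs * g xs := by
  have hh : Continuous h := continuous_iff_continuousAt.2 fun z => (P.hasGradientAt z).continuousAt
  have hnumerator : Tendsto (fun k => (f (x (k + 1))).toReal + h (x (k + 1))) l
      (𝓝 ((f xs).toReal + h xs)) :=
    ((EReal.tendsto_toReal hxs (P.ne_bot xs)).comp hf).add ((hh.tendsto xs).comp hx)
  refine tendsto_nhds_unique hnumerator ?_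
  refine (hc.mul ((P.continuous_denom.tendsto xs).comp hx)).congr fun k => ?_
  exact S.ratio_mul_denom (S.mem_dom P hαK (k + 1)).1

end Limits

end IsPGSASequence

theorem toReal_Ffrac {z : ℝ^n} (hg : g z ≠ 0) (hf : f z ≠ ⊤) :
    (Ffrac f g h z).toReal = ((f z).toReal + h z) / g z := by
  rw [Ffrac, if_pos ⟨hg, hf⟩, EReal.toReal_coe]

theorem pgsa_accumulation_point_is_critical_general {αlo αhi : ℝ} {α c : ℕ → ℝ} {x y : ℕ → ℝ^n}
    {xs : ℝ^n} (P : IsFractionalProgram f g h h' K)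
    (S : IsPGSASequence f g h h' αlo αhi α x y c) (hαK : αhi * K < 1)
    (hacc : MapClusterPt xs atTop x) :
    (g xs ≠ 0 ∧ f xs ≠ ⊤) ∧
      ∃ ys ∈ csub g xs, (Ffrac f g h xs).toReal • ys - h' xs ∈ fsub f xs := by
  obtain ⟨𝒰, h𝒰, hx_succ⟩ :=
    mapClusterPt_iff_ultrafilter.1 (mapClusterPt_atTop_comp_succ_iff.2 hacc)
  obtain ⟨ys, hys, hy⟩ := exists_mem_csub_tendsto_ultrafilter P.continuous_denom.continuousAt
    (S.tendsto_of_tendsto_succ P hαK h𝒰 hx_succ) S.mem_csub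
  obtain ⟨cs, hc⟩ := S.exists_tendsto_ratio P hαK
  have hprox (k : ℕ) := (S.isProximalSubgradient_succ k).mono
    (div_le_div_of_nonneg_right (S.inv_step_le k) zero_le_two)
  have hlsc : LowerSemicontinuousAt f xs := P.lowerSemicontinuous xs
  have hv := S.tendsto_proximalSubgradient P hαK h𝒰 hx_succ hy (hc.mono_left h𝒰)
  have hprox_lim : IsProximalSubgradient f (αlo⁻¹ / 2) xs (cs • ys - h' xs) :=
    .of_tendsto hlsc hx_succ hv hprox
  have hf : f xs ≠ ⊤ := hprox_lim.ne_top S.init_mem_dom.2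
  have hnumerator : (f xs).toReal + h xs = cs * g xs :=
    S.numerator_eq_of_tendsto P hαK hx_succ ((hc.comp (tendsto_add_atTop_nat 1)).mono_left h𝒰) hf
      (IsProximalSubgradient.tendsto_apply hlsc hx_succ hv hprox)
  have hg : g xs ≠ 0 := fun hg0 =>
    P.denom_ne_zero_of_numerator_nonpos hf (by simp [hnumerator, hg0]) hg0
  refine ⟨⟨hg, hf⟩, ys, hys, ?_⟩
  rw [toReal_Ffrac hg hf, hnumerator, mul_div_cancel_right₀ _ hg]
  exact hprox_lim.mem_fsub hf (P.ne_bot xs)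

end PGSA

/-- Theorem 4.5: any accumulation point of the PGSA sequence is a critical point of F. -/
theorem pgsa_accumulation_point_is_critical
    {n : ℕ} (hn : 1 ≤ n)
    (f : EuclideanSpace ℝ (Fin n) → EReal) (g h : EuclideanSpace ℝ (Fin n) → ℝ)
    (h' : EuclideanSpace ℝ (Fin n) → EuclideanSpace ℝ (Fin n)) (L : ℝ)
    (hf_ne_bot : ∀ z, f z ≠ ⊥) (hf_proper : ∃ z, f z ≠ ⊤)
    (hf_lsc : LowerSemicontinuous f)
    (hf_bdd : ∃ m : ℝ, ∀ z, (m : EReal) ≤ f z)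
    (hf_cont : ContinuousOn f {z | f z ≠ ⊤})
    (hg_cvx : ConvexOn ℝ Set.univ g)
    (hL : 0 < L)
    (hh_grad : ∀ z, HasGradientAt h (h' z) z)
    (hh_lip : LipschitzWith (Real.toNNReal L) h')
    (hΩ : ∃ z, g z ≠ 0)
    (hfh : ∀ z, 0 ≤ f z + ((h z : ℝ) : EReal))
    (hg_pos : ∀ z, f z ≠ ⊤ → g z ≠ 0 → 0 < g z)
    (hA1 : ∀ z, g z = 0 → f z + ((h z : ℝ) : EReal) ≠ 0)
    (x y : ℕ → EuclideanSpace ℝ (Fin n)) (c α : ℕ → ℝ) (αlo αhi : ℝ)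
    (hx0 : g (x 0) ≠ 0 ∧ f (x 0) ≠ ⊤)
    (hαlo : 0 < αlo) (hαhi : αhi < 1 / L) (hα : ∀ k, αlo ≤ α k ∧ α k ≤ αhi)
    (hy : ∀ k, y (k + 1) ∈ csub g (x k))
    (hc : ∀ k, c k = ((f (x k)).toReal + h (x k)) / g (x k))
    (hiter : ∀ k, x (k + 1) ∈ proxSet (fun z => ((α k : ℝ) : EReal) * f z)
      (x k - α k • h' (x k) + (α k * c k) • y (k + 1)))
    (xs : EuclideanSpace ℝ (Fin n))
    (hacc : ∃ φ : ℕ → ℕ, StrictMono φ ∧ Tendsto (fun j => x (φ j)) atTop (𝓝 xs)) :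
    (g xs ≠ 0 ∧ f xs ≠ ⊤) ∧
      ∃ ys ∈ csub g xs, ((Ffrac f g h xs).toReal) • ys - h' xs ∈ fsub f xs := by
  obtain ⟨φ, hφ, hlim⟩ := hacc
  refine pgsa_accumulation_point_is_critical_general
    ⟨hf_lsc, hg_cvx.locallyLipschitz.continuous, hh_grad, hh_lip, hfh, hg_pos, hA1⟩
    ⟨hx0, hαlo, hα, hy, hc, hiter⟩ ?_ (hlim.mapClusterPt.of_comp hφ.tendsto_atTop)
  rwa [Real.coe_toNNReal L hL.le, ← lt_div_iff₀ hL]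
end
end
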